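/- arXiv:2403.06662 — 7 statements merged into one kernel-verified Lean document; each statement's English description precedes it below -/
import Mathlib

section
/- Let d ≥ 1, ℓ > 0, p ∈ (1,2], ϰ > 0, and let f : ℝ^d → ℝ be bounded below with infimum f̲. Assume the set 𝒱* = {w ∈ ℝ^d : f(w) = f̲} of global minimizers of f is nonempty, compact and convex, and that f(w) − f̲ ≥ ℓ·dist(w,𝒱*)^p for all w ∈ ℝ^d, and ϑ ≥ −f̲. Then for all w, v ∈ ℝ^d one has A(w,v) − A(V*(v),v) ≥ ‖w − V*(v)‖² − 2·(2ϰ/ℓ²)^{1/(p−1)}. -/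
open Metric

/-!
Let `x` be the projection of `v` onto `S`. The residual `v - x` makes an obtuse angle with every
direction into `S`, so Pythagoras holds up to the product of the two distances to `S`:
`‖v - w‖² ≥ ‖v - x‖² + ‖w - x‖² - 2 t` with `t = dist(v, S) · dist(w, S)`. The growth of `f` makes
the first term of `A(w, v) - A(x, v)` at least `(ℓ² / ϰ) t ^ p`, and since `p > 1` this dominates
`2 t` up to a constant.
-/

/-- `x` is a metric projection of `v` onto `S`: a point of `S` at minimal distance from `v`.
Stated as a relation, it requires neither existence nor uniqueness of such points. -/
def IsNearestPoint {α : Type*} [PseudoMetricSpace α] (S : Set α) (v x : α) : Prop :=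
  x ∈ S ∧ ∀ y ∈ S, dist v x ≤ dist v y

namespace IsNearestPoint

theorem infDist_eq_dist {α : Type*} [PseudoMetricSpace α] {S : Set α} {v x : α}
    (hx : IsNearestPoint S v x) : infDist v S = dist v x :=
  le_antisymm (infDist_le_dist_of_mem hx.1) ((le_infDist ⟨x, hx.1⟩).2 fun {y} ↦ hx.2 y)

variable {E : Type*} [NormedAddCommGroup E] [InnerProductSpace ℝ E] {S : Set E} {v x : E}

theorem inner_sub_sub_nonpos (hx : IsNearestPoint S v x) (hS : Convex ℝ S) {y : E} (hy : y ∈ S) :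
    inner ℝ (v - x) (y - x) ≤ 0 := by
  have hnorm : ‖v - x‖ = ⨅ y : S, ‖v - y‖ := by
    simpa only [infDist_eq_iInf, dist_eq_norm] using hx.infDist_eq_dist.symm
  exact (norm_eq_iInf_iff_real_inner_le_zero hS hx.1).1 hnorm y hy

theorem inner_sub_sub_le_infDist_mul_infDist (hx : IsNearestPoint S v x) (hS : Convex ℝ S)
    (w : E) : inner ℝ (v - x) (w - x) ≤ infDist v S * infDist w S := by
  have : Nonempty S := ⟨⟨x, hx.1⟩⟩
  rw [hx.infDist_eq_dist, infDist_eq_iInf, Real.mul_iInf_of_nonneg dist_nonneg]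
  refine le_ciInf fun ⟨y, hy⟩ ↦ ?_
  calc inner ℝ (v - x) (w - x)
      = inner ℝ (v - x) (w - y) + inner ℝ (v - x) (y - x) := by
        rw [← inner_add_right, sub_add_sub_cancel]
    _ ≤ inner ℝ (v - x) (w - y) := add_le_of_nonpos_right (hx.inner_sub_sub_nonpos hS hy)
    _ ≤ ‖v - x‖ * ‖w - y‖ := real_inner_le_norm _ _
    _ = dist v x * dist w y := by rw [dist_eq_norm, dist_eq_norm]

theorem norm_sub_sq_add_norm_sub_sq_sub_le (hx : IsNearestPoint S v x) (hS : Convex ℝ S) (w : E) :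
    ‖v - x‖ ^ 2 + ‖w - x‖ ^ 2 - 2 * (infDist v S * infDist w S) ≤ ‖v - w‖ ^ 2 := by
  have hexpand := norm_sub_sq_real (v - x) (w - x)
  rw [sub_sub_sub_cancel_right] at hexpand
  linarith [hx.inner_sub_sub_le_infDist_mul_infDist hS w]

end IsNearestPoint

theorem mul_sub_rpow_le_mul_rpow {a c p t : ℝ} (ha : 0 ≤ a) (hc : 0 < c) (hp : 1 < p)
    (ht : 0 ≤ t) : a * (t - (a / c) ^ (1 / (p - 1))) ≤ c * t ^ p := by
  have hp' : 0 < p - 1 := sub_pos.2 hp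
  -- The root is the point where the linear term `a * t` and `c * t ^ p` cross.
  rcases le_total t ((a / c) ^ (1 / (p - 1))) with hle | hge
  · exact (mul_nonpos_of_nonneg_of_nonpos ha (sub_nonpos.2 hle)).trans (by positivity)
  · have hslope : a ≤ c * t ^ (p - 1) := by
      rw [← div_le_iff₀' hc]
      rwa [one_div, Real.rpow_inv_le_iff_of_pos (by positivity) ht hp'] at hge
    calc a * (t - (a / c) ^ (1 / (p - 1)))
        ≤ a * t := mul_le_mul_of_nonneg_left (sub_le_self t (by positivity)) ha
      _ ≤ c * t ^ (p - 1) * t := mul_le_mul_of_nonneg_right hslope ht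
      _ = c * t ^ p := by
        rw [mul_assoc, ← Real.rpow_add_one' ht (by linarith), sub_add_cancel]

theorem sq_mul_infDist_mul_infDist_rpow_le {α : Type*} [PseudoMetricSpace α] {S : Set α}
    {f : α → ℝ} {ℓ m p : ℝ} (hℓ : 0 ≤ ℓ) (hgrow : ∀ w, ℓ * infDist w S ^ p ≤ f w - m) (v w : α) :
    ℓ ^ 2 * (infDist v S * infDist w S) ^ p ≤ (f w - m) * (f v - m) := by
  have hnonneg (u : α) : 0 ≤ ℓ * infDist u S ^ p :=
    mul_nonneg hℓ (Real.rpow_nonneg infDist_nonneg p)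
  calc ℓ ^ 2 * (infDist v S * infDist w S) ^ p
      = (ℓ * infDist w S ^ p) * (ℓ * infDist v S ^ p) := by
        rw [Real.mul_rpow infDist_nonneg infDist_nonneg]
        ring
    _ ≤ (f w - m) * (f v - m) :=
        mul_le_mul (hgrow w) (hgrow v) (hnonneg v) ((hnonneg w).trans (hgrow w))

theorem stmt_0_general {E : Type*} [NormedAddCommGroup E] [InnerProductSpace ℝ E]
    {ℓ ϰ p ϑ fbar : ℝ} (hℓ : 0 < ℓ) (hϰ : 0 < ϰ) (hp : 1 < p) {f : E → ℝ}
    (hfbar : IsGLB (Set.range f) fbar) {S : Set E} (hS : S = {w | f w = fbar})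
    (hSconv : Convex ℝ S) (hgrow : ∀ w, ℓ * infDist w S ^ p ≤ f w - fbar) (hϑ : -fbar ≤ ϑ)
    {A : E → E → ℝ} (hA : ∀ w v, A w v = (1 / ϰ) * f w * (f v + ϑ) + ‖v - w‖ ^ 2)
    {v x : E} (hx : IsNearestPoint S v x) (w : E) :
    ‖w - x‖ ^ 2 - 2 * (2 * ϰ / ℓ ^ 2) ^ (1 / (p - 1)) ≤ A w v - A x v := by
  set t := infDist v S * infDist w S
  have hfx : f x = fbar := hS.le hx.1
  have hpyth : ‖v - x‖ ^ 2 + ‖w - x‖ ^ 2 - 2 * t ≤ ‖v - w‖ ^ 2 :=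
    hx.norm_sub_sq_add_norm_sub_sq_sub_le hSconv w
  have hsuperlinear : 2 * (t - (2 * ϰ / ℓ ^ 2) ^ (1 / (p - 1))) ≤ ℓ ^ 2 / ϰ * t ^ p := by
    rw [← div_div_eq_mul_div]
    exact mul_sub_rpow_le_mul_rpow zero_le_two (by positivity) hp
      (mul_nonneg infDist_nonneg infDist_nonneg)
  have hprod : ℓ ^ 2 / ϰ * t ^ p ≤ 1 / ϰ * ((f w - fbar) * (f v + ϑ)) := by
    have hfw : 0 ≤ f w - fbar := sub_nonneg.2 (hfbar.1 ⟨w, rfl⟩)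
    have hgrow_prod : ℓ ^ 2 * t ^ p ≤ (f w - fbar) * (f v - fbar) :=
      sq_mul_infDist_mul_infDist_rpow_le hℓ.le hgrow v w
    calc ℓ ^ 2 / ϰ * t ^ p = 1 / ϰ * (ℓ ^ 2 * t ^ p) := by ring
      _ ≤ 1 / ϰ * ((f w - fbar) * (f v - fbar)) := by gcongr 1 / ϰ * ?_
      _ ≤ 1 / ϰ * ((f w - fbar) * (f v + ϑ)) := by
        gcongr
        linarith
  rw [hA, hA, hfx]
  linarith

/-- Lemma 3.1 (Lemma `lem:111`): lower bound for `A(w,v) - A(V*(v),v)` when the set of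
global minimizers is nonempty, compact and convex. -/
theorem stmt_0 {d : ℕ} (hd : 1 ≤ d)
    (ℓ ϰ p ϑ fbar : ℝ) (hℓ : 0 < ℓ) (hϰ : 0 < ϰ) (hp1 : 1 < p) (hp2 : p ≤ 2)
    (f : EuclideanSpace ℝ (Fin d) → ℝ)
    (hfbar : IsGLB (Set.range f) fbar)
    (S : Set (EuclideanSpace ℝ (Fin d))) (hS : S = {w | f w = fbar})
    (hSne : S.Nonempty) (hScomp : IsCompact S) (hSconv : Convex ℝ S)
    (hgrow : ∀ w, ℓ * Metric.infDist w S ^ p ≤ f w - fbar)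
    (hϑ : -fbar ≤ ϑ)
    (Vs : EuclideanSpace ℝ (Fin d) → EuclideanSpace ℝ (Fin d))
    (hVs : ∀ v, Vs v ∈ S ∧ ∀ y ∈ S, ‖v - Vs v‖ ≤ ‖v - y‖)
    (A : EuclideanSpace ℝ (Fin d) → EuclideanSpace ℝ (Fin d) → ℝ)
    (hA : ∀ w v, A w v = (1/ϰ) * f w * (f v + ϑ) + ‖v - w‖^2) :
    ∀ w v : EuclideanSpace ℝ (Fin d),
      ‖w - Vs v‖^2 - 2 * (2*ϰ/ℓ^2) ^ ((1:ℝ)/(p-1)) ≤ A w v - A (Vs v) v := fun w v ↦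
  stmt_0_general hℓ hϰ hp1 hfbar hS hSconv hgrow hϑ hA
    (by simpa only [IsNearestPoint, dist_eq_norm] using hVs v) w
end

section
/- Let d ≥ 1, ℓ > 0, p ∈ (1,2], ϰ > 0, and let f : ℝ^d → ℝ be bounded below with infimum f̲. Assume 𝒱* = 𝒱₁* ∪ 𝒱₂*, where 𝒱₁* and 𝒱₂* are nonempty, compact and convex, that f(w) = f̲ for all w ∈ 𝒱*, that f(w) − f̲ ≥ ℓ·dist(w,𝒱*)^p for all w ∈ ℝ^d, and that ϑ ≥ ℓ·diam(𝒱*)^p − f̲. Let Z₁ := {w : dist(w,𝒱₁*) ≤ dist(w,𝒱₂*)} and Z₂ := {w : dist(w,𝒱₂*) ≤ dist(w,𝒱₁*)}. Then for every v ∈ ℝ^d: A(w,v) − A(V₁*(v),v) ≥ ‖w − V₁*(v)‖² − 2·(2^p·ϰ/ℓ²)^{1/(p−1)} for all w ∈ Z₁, and A(w,v) − A(V₂*(v),v) ≥ ‖w − V₂*(v)‖² − 2·(2^p·ϰ/ℓ²)^{1/(p−1)} for all w ∈ Z₂. -/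
open Metric

/-!
Let `u` be the nearest point to `v` in the convex set `K`. Obtuseness of the angle at `u` bounds
the cross term of `‖v - w‖² = ‖v - u‖² - 2 ⟪v - u, w - u⟫ + ‖w - u‖²` by
`2 ‖v - u‖ dist(w, K)`. In the zone where `K` is the closest piece, growth gives
`f w - m ≥ ℓ dist(w, K) ^ p`; the choice of `ϑ` makes `f v + ϑ` at least a multiple of
`‖v - u‖ ^ p`, even though `v` may be close to another piece. So with `t = ‖v - u‖ dist(w, K)`
the product term is at least `2 t ^ p / c`, which absorbs `2 t` up to a constant.
-/

theorem sub_rpow_div_le_rpow_one_div {c t p : ℝ} (hc : 0 < c) (ht : 0 ≤ t) (hp : 1 < p) :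
    t - t ^ p / c ≤ c ^ (1 / (p - 1)) := by
  have hp' : 0 < p - 1 := sub_pos.2 hp
  rcases le_or_gt t (c ^ (1 / (p - 1))) with hsmall | hlarge
  · have : 0 ≤ t ^ p / c := by positivity
    linarith
  · have ht' : 0 < t := (Real.rpow_pos_of_pos hc _).trans hlarge
    have hct : c ≤ t ^ (p - 1) := by
      rw [one_div] at hlarge
      exact (Real.rpow_inv_le_iff_of_pos hc.le ht hp').1 hlarge.le
    have htp : t ≤ t ^ p / c := by
      rw [le_div_iff₀ hc, ← sub_add_cancel p 1, Real.rpow_add_one ht'.ne', mul_comm]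
      exact mul_le_mul_of_nonneg_right hct ht
    have : 0 ≤ c ^ (1 / (p - 1)) := by positivity
    linarith

theorem two_mul_half_add_rpow_le {x y p : ℝ} (hx : 0 ≤ x) (hy : 0 ≤ y) (hp : 1 ≤ p) :
    2 * ((x + y) / 2) ^ p ≤ x ^ p + y ^ p := by
  obtain ⟨-, hconvex⟩ := convexOn_rpow hp
  have hmidpoint := hconvex hx hy one_half_pos.le one_half_pos.le (add_halves 1)
  simp only [smul_eq_mul, one_div_mul_eq_div, ← add_div] at hmidpoint
  linarith

section PseudoMetricSpace

variable {X : Type*} [PseudoMetricSpace X] {S : Set X}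

theorem infDist_union {T : Set X} (hS : S.Nonempty) (hT : T.Nonempty) (x : X) :
    infDist x (S ∪ T) = min (infDist x S) (infDist x T) := by
  simp only [infDist, infEDist_union]
  exact ENNReal.toReal_min (infEDist_ne_top hS) (infEDist_ne_top hT)

variable {f : X → ℝ} {ℓ ϰ p ϑ m : ℝ} {u v : X}

theorem mul_half_dist_rpow_le_add_of_growth (hℓ : 0 ≤ ℓ) (hp : 1 ≤ p)
    (hS : Bornology.IsBounded S) (hgrow : ∀ w, ℓ * infDist w S ^ p ≤ f w - m)
    (hϑ : ℓ * diam S ^ p - m ≤ ϑ) (hu : u ∈ S) :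
    ℓ * (2 * (dist v u / 2) ^ p) ≤ f v + ϑ := by
  have hdist : dist v u ≤ infDist v S + diam S := dist_le_infDist_add_diam hS hu
  calc ℓ * (2 * (dist v u / 2) ^ p)
      ≤ ℓ * (2 * ((infDist v S + diam S) / 2) ^ p) := by gcongr
    _ ≤ ℓ * (infDist v S ^ p + diam S ^ p) := by
        gcongr
        exact two_mul_half_add_rpow_le infDist_nonneg diam_nonneg hp
    _ ≤ f v + ϑ := by linarith [hgrow v]

theorem two_mul_dist_mul_infDist_sub_le_of_growth (hℓ : 0 < ℓ) (hϰ : 0 < ϰ) (hp : 1 < p)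
    (hS : Bornology.IsBounded S) (hgrow : ∀ w, ℓ * infDist w S ^ p ≤ f w - m)
    (hϑ : ℓ * diam S ^ p - m ≤ ϑ) (hu : u ∈ S) (w : X) :
    2 * (dist v u * infDist w S) - 2 * (2 ^ p * ϰ / ℓ ^ 2) ^ (1 / (p - 1)) ≤
      1 / ϰ * (f w - m) * (f v + ϑ) := by
  have hb : 0 ≤ infDist w S := infDist_nonneg
  have hfv : ℓ * (2 * (dist v u / 2) ^ p) ≤ f v + ϑ :=
    mul_half_dist_rpow_le_add_of_growth hℓ.le hp.le hS hgrow hϑ hu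
  have hfw : 0 ≤ f w - m := le_trans (by positivity) (hgrow w)
  have hslack := sub_rpow_div_le_rpow_one_div (c := 2 ^ p * ϰ / ℓ ^ 2)
    (t := dist v u * infDist w S) (by positivity) (by positivity) hp
  calc 2 * (dist v u * infDist w S) - 2 * (2 ^ p * ϰ / ℓ ^ 2) ^ (1 / (p - 1))
      ≤ 2 * ((dist v u * infDist w S) ^ p / (2 ^ p * ϰ / ℓ ^ 2)) := by linarith
    _ = 1 / ϰ * (ℓ * infDist w S ^ p) * (ℓ * (2 * (dist v u / 2) ^ p)) := by
        rw [Real.mul_rpow dist_nonneg hb, Real.div_rpow dist_nonneg zero_le_two]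
        field_simp
    _ ≤ 1 / ϰ * (f w - m) * (f v + ϑ) := by
        gcongr
        exact hgrow w

end PseudoMetricSpace

section InnerProductSpace

variable {E : Type*} [NormedAddCommGroup E] [InnerProductSpace ℝ E] {K : Set E} {u v : E}

theorem real_inner_sub_le_zero_of_forall_norm_sub_le (hK : Convex ℝ K) (hu : u ∈ K)
    (hmin : ∀ y ∈ K, ‖v - u‖ ≤ ‖v - y‖) {y : E} (hy : y ∈ K) :
    inner ℝ (v - u) (y - u) ≤ 0 := by
  have : Nonempty K := ⟨⟨u, hu⟩⟩
  refine (norm_eq_iInf_iff_real_inner_le_zero hK hu).1 ?_ y hy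
  exact le_antisymm (le_ciInf fun y => hmin y y.2)
    (ciInf_le ⟨0, Set.forall_mem_range.2 fun _ => norm_nonneg _⟩ (⟨u, hu⟩ : K))

theorem real_inner_sub_le_norm_mul_infDist (hK : Convex ℝ K) (hu : u ∈ K)
    (hmin : ∀ y ∈ K, ‖v - u‖ ≤ ‖v - y‖) (w : E) :
    inner ℝ (v - u) (w - u) ≤ ‖v - u‖ * infDist w K := by
  have hle : ∀ y ∈ K, inner ℝ (v - u) (w - u) ≤ ‖v - u‖ * dist w y := fun y hy => by
    calc inner ℝ (v - u) (w - u)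
        = inner ℝ (v - u) (w - y) + inner ℝ (v - u) (y - u) := by
          rw [← inner_add_right, sub_add_sub_cancel]
      _ ≤ inner ℝ (v - u) (w - y) :=
          add_le_of_nonpos_right (real_inner_sub_le_zero_of_forall_norm_sub_le hK hu hmin hy)
      _ ≤ ‖v - u‖ * dist w y := dist_eq_norm w y ▸ real_inner_le_norm _ _
  have : Nonempty K := ⟨⟨u, hu⟩⟩
  rw [infDist_eq_iInf, Real.mul_iInf_of_nonneg (norm_nonneg _)]
  exact le_ciInf fun y => hle y y.2

theorem norm_sub_sq_sub_two_mul_infDist_le (hK : Convex ℝ K) (hu : u ∈ K)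
    (hmin : ∀ y ∈ K, ‖v - u‖ ≤ ‖v - y‖) (w : E) :
    ‖w - u‖ ^ 2 - 2 * (‖v - u‖ * infDist w K) ≤ ‖v - w‖ ^ 2 - ‖v - u‖ ^ 2 := by
  have hinner := real_inner_sub_le_norm_mul_infDist hK hu hmin w
  have hnorm := norm_sub_sq_real (v - u) (w - u)
  rw [sub_sub_sub_cancel_right] at hnorm
  linarith

variable {f : E → ℝ} {ℓ ϰ p ϑ m : ℝ}

theorem norm_sub_sq_sub_le_of_growth {S : Set E} (hℓ : 0 < ℓ) (hϰ : 0 < ϰ) (hp : 1 < p)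
    (hS : Bornology.IsBounded S) (hgrow : ∀ w, ℓ * infDist w S ^ p ≤ f w - m)
    (hϑ : ℓ * diam S ^ p - m ≤ ϑ) (hKS : K ⊆ S) (hK : Convex ℝ K) (hu : u ∈ K)
    (hmin : ∀ y ∈ K, ‖v - u‖ ≤ ‖v - y‖) {w : E} (hw : infDist w S = infDist w K) :
    ‖w - u‖ ^ 2 - 2 * (2 ^ p * ϰ / ℓ ^ 2) ^ (1 / (p - 1)) ≤
      1 / ϰ * (f w - m) * (f v + ϑ) + (‖v - w‖ ^ 2 - ‖v - u‖ ^ 2) := by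
  have hprojection := norm_sub_sq_sub_two_mul_infDist_le hK hu hmin w
  have hproduct : 2 * (‖v - u‖ * infDist w K) - 2 * (2 ^ p * ϰ / ℓ ^ 2) ^ (1 / (p - 1)) ≤
      1 / ϰ * (f w - m) * (f v + ϑ) := by
    rw [← hw, ← dist_eq_norm]
    exact two_mul_dist_mul_infDist_sub_le_of_growth hℓ hϰ hp hS hgrow hϑ (hKS hu) w
  linarith

theorem stmt_8_general (hℓ : 0 < ℓ) (hϰ : 0 < ϰ) (hp : 1 < p) {S₁ S₂ : Set E}
    (hS : Bornology.IsBounded (S₁ ∪ S₂)) (hS₁ : Convex ℝ S₁) (hS₂ : Convex ℝ S₂)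
    (hfS : ∀ w ∈ S₁ ∪ S₂, f w = m)
    (hgrow : ∀ w, ℓ * infDist w (S₁ ∪ S₂) ^ p ≤ f w - m)
    (hϑ : ℓ * diam (S₁ ∪ S₂) ^ p - m ≤ ϑ) {V₁ V₂ : E → E}
    (hV₁ : ∀ v, V₁ v ∈ S₁ ∧ ∀ y ∈ S₁, ‖v - V₁ v‖ ≤ ‖v - y‖)
    (hV₂ : ∀ v, V₂ v ∈ S₂ ∧ ∀ y ∈ S₂, ‖v - V₂ v‖ ≤ ‖v - y‖)
    {A : E → E → ℝ} (hA : ∀ w v, A w v = 1 / ϰ * f w * (f v + ϑ) + ‖v - w‖ ^ 2) (v : E) :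
    (∀ w ∈ {w | infDist w S₁ ≤ infDist w S₂},
      ‖w - V₁ v‖ ^ 2 - 2 * (2 ^ p * ϰ / ℓ ^ 2) ^ (1 / (p - 1)) ≤ A w v - A (V₁ v) v) ∧
    (∀ w ∈ {w | infDist w S₂ ≤ infDist w S₁},
      ‖w - V₂ v‖ ^ 2 - 2 * (2 ^ p * ϰ / ℓ ^ 2) ^ (1 / (p - 1)) ≤ A w v - A (V₂ v) v) := by
  obtain ⟨hV₁mem, hV₁min⟩ := hV₁ v
  obtain ⟨hV₂mem, hV₂min⟩ := hV₂ v
  have hinf := infDist_union ⟨V₁ v, hV₁mem⟩ ⟨V₂ v, hV₂mem⟩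
  have hAsub : ∀ u ∈ S₁ ∪ S₂, ∀ w, A w v - A u v =
      1 / ϰ * (f w - m) * (f v + ϑ) + (‖v - w‖ ^ 2 - ‖v - u‖ ^ 2) := fun u hu w => by
    rw [hA, hA, hfS u hu]
    ring
  refine ⟨fun w hw => ?_, fun w hw => ?_⟩
  · rw [hAsub _ (.inl hV₁mem)]
    exact norm_sub_sq_sub_le_of_growth hℓ hϰ hp hS hgrow hϑ Set.subset_union_left hS₁
      hV₁mem hV₁min ((hinf w).trans (min_eq_left hw))
  · rw [hAsub _ (.inr hV₂mem)]
    exact norm_sub_sq_sub_le_of_growth hℓ hϰ hp hS hgrow hϑ Set.subset_union_right hS₂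
      hV₂mem hV₂min ((hinf w).trans (min_eq_right hw))

end InnerProductSpace

/-- Lemma `lem:999`: two-zone lower bound for `A(w,v) − A(Vᵢ*(v),v)` when the set of
minimizers is the union of two nonempty compact convex sets. -/
theorem stmt_8 {d : ℕ} (hd : 1 ≤ d)
    (ℓ ϰ p ϑ fbar : ℝ) (hℓ : 0 < ℓ) (hϰ : 0 < ϰ) (hp1 : 1 < p) (hp2 : p ≤ 2)
    (f : EuclideanSpace ℝ (Fin d) → ℝ)
    (hfbar : IsGLB (Set.range f) fbar)
    (S S1 S2 : Set (EuclideanSpace ℝ (Fin d))) (hS : S = S1 ∪ S2)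
    (hS1ne : S1.Nonempty) (hS1comp : IsCompact S1) (hS1conv : Convex ℝ S1)
    (hS2ne : S2.Nonempty) (hS2comp : IsCompact S2) (hS2conv : Convex ℝ S2)
    (hfS : ∀ w ∈ S, f w = fbar)
    (hgrow : ∀ w, ℓ * Metric.infDist w S ^ p ≤ f w - fbar)
    (hϑ : ℓ * Metric.diam S ^ p - fbar ≤ ϑ)
    (Z1 Z2 : Set (EuclideanSpace ℝ (Fin d)))
    (hZ1 : Z1 = {w | Metric.infDist w S1 ≤ Metric.infDist w S2})
    (hZ2 : Z2 = {w | Metric.infDist w S2 ≤ Metric.infDist w S1})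
    (V1 V2 : EuclideanSpace ℝ (Fin d) → EuclideanSpace ℝ (Fin d))
    (hV1 : ∀ v, V1 v ∈ S1 ∧ ∀ y ∈ S1, ‖v - V1 v‖ ≤ ‖v - y‖)
    (hV2 : ∀ v, V2 v ∈ S2 ∧ ∀ y ∈ S2, ‖v - V2 v‖ ≤ ‖v - y‖)
    (A : EuclideanSpace ℝ (Fin d) → EuclideanSpace ℝ (Fin d) → ℝ)
    (hA : ∀ w v, A w v = (1/ϰ) * f w * (f v + ϑ) + ‖v - w‖^2) :
    ∀ v : EuclideanSpace ℝ (Fin d),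
      (∀ w ∈ Z1, ‖w - V1 v‖^2 - 2 * ((2:ℝ)^p * ϰ / ℓ^2) ^ ((1:ℝ)/(p-1))
          ≤ A w v - A (V1 v) v) ∧
      (∀ w ∈ Z2, ‖w - V2 v‖^2 - 2 * ((2:ℝ)^p * ϰ / ℓ^2) ^ ((1:ℝ)/(p-1))
          ≤ A w v - A (V2 v) v) := by
  subst hS hZ1 hZ2
  exact stmt_8_general hℓ hϰ hp1 (hS1comp.isBounded.union hS2comp.isBounded) hS1conv hS2conv
    hfS hgrow hϑ hV1 hV2 hA
end

section
/- Under the hypotheses: d ≥ 1, ℓ > 0, p ∈ (1,2], ϰ > 0, f : ℝ^d → ℝ bounded below with infimum f̲, 𝒱* = 𝒱₁* ∪ 𝒱₂* with 𝒱₁*, 𝒱₂* nonempty compact convex, f ≡ f̲ on 𝒱*, f(w) − f̲ ≥ ℓ·dist(w,𝒱*)^p for all w, and ϑ ≥ ℓ·diam(𝒱*)^p − f̲; with Z₁ := {w : dist(w,𝒱₁*) ≤ dist(w,𝒱₂*)} and Z₂ := {w : dist(w,𝒱₂*) ≤ dist(w,𝒱₁*)}, for every v ∈ ℝ^d and each i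 ∈ {1,2}: A(Vᵢ*(v),v) − 2·(2^p·ϰ/ℓ²)^{1/(p−1)} ≤ inf_{w ∈ Zᵢ} A(w,v) ≤ A(Vᵢ*(v),v). -/
open Metric

/-!
Let `v'` be a point of `S₁` nearest to `v`, let `w` be at least as close to `S₁` as to `S₂`, and put
`R = dist(v, S₁)`, `r = dist(w, S₁)`. Moving from `v'` to `w` lowers the quadratic term of `A(·, v)`
by at most `2rR`, since `R ≤ r + d(v, w)`. It raises the other term by `(f w - m)(f v + ϑ) / ϰ`,
where `f w - m ≥ ℓ r ^ p` because `r = dist(w, S₁ ∪ S₂)`, and `f v + ϑ ≥ 2ℓ (R / 2) ^ p` because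
`R ≤ dist(v, S₁ ∪ S₂) + diam (S₁ ∪ S₂)` and `ϑ` absorbs the diameter. With `x = rR` and
`K = 2 ^ p ϰ / ℓ²`, the net loss is at most `2 (x - x ^ p / K) ≤ 2 K ^ (1 / (p - 1))`.
-/

section Real

theorem two_mul_rpow_half_add_le {a b p : ℝ} (ha : 0 ≤ a) (hb : 0 ≤ b) (hp : 1 ≤ p) :
    2 * ((a + b) / 2) ^ p ≤ a ^ p + b ^ p := by
  have hconv := (convexOn_rpow hp).2 ha hb (by norm_num : (0 : ℝ) ≤ 1 / 2)
    (by norm_num : (0 : ℝ) ≤ 1 / 2) (by norm_num)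
  simp only [smul_eq_mul, one_div_mul_eq_div, ← add_div] at hconv
  linarith

theorem sub_rpow_div_le_rpow_one_div_s9 {K x p : ℝ} (hK : 0 < K) (hx : 0 ≤ x) (hp : 1 < p) :
    x - x ^ p / K ≤ K ^ (1 / (p - 1)) := by
  rw [one_div]
  rcases le_total x (K ^ (p - 1)⁻¹) with hsmall | hlarge
  · exact (sub_le_self x (by positivity)).trans hsmall
  · have hx0 : 0 < x := (Real.rpow_pos_of_pos hK _).trans_le hlarge
    have hKx : K ≤ x ^ p / x := by
      rw [← Real.rpow_sub_one hx0.ne']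
      exact (Real.rpow_inv_le_iff_of_pos hK.le hx (sub_pos.2 hp)).1 hlarge
    have hxK : x ≤ x ^ p / K := (le_div_comm₀ hK hx0).1 hKx
    exact (sub_nonpos.2 hxK).trans (by positivity)

end Real

section Metric

variable {X : Type*} [PseudoMetricSpace X] {S T : Set X} {v w x y : X}

theorem infDist_eq_dist_of_isMinOn (hy : y ∈ S) (hmin : IsMinOn (dist x) S y) :
    infDist x S = dist x y :=
  (infDist_le_dist_of_mem hy).antisymm ((le_infDist ⟨y, hy⟩).2 fun _ hz => hmin hz)

theorem infDist_le_infDist_union (hS : S.Nonempty) (h : infDist x S ≤ infDist x T) :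
    infDist x S ≤ infDist x (S ∪ T) :=
  (le_infDist (hS.mono Set.subset_union_left)).2 fun _ hz =>
    hz.elim infDist_le_dist_of_mem fun hzT => h.trans (infDist_le_dist_of_mem hzT)

theorem sq_infDist_sub_le_sq_dist :
    infDist v S ^ 2 - 2 * (infDist w S * infDist v S) ≤ dist v w ^ 2 := by
  have hr : 0 ≤ infDist w S := infDist_nonneg
  have hR : 0 ≤ infDist v S := infDist_nonneg
  have htri : infDist v S ≤ infDist w S + dist v w := infDist_le_infDist_add_dist
  rcases le_total (infDist w S) (infDist v S) with h | h
  · nlinarith [dist_nonneg (x := v) (y := w)]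
  · nlinarith [sq_nonneg (dist v w)]

theorem two_mul_rpow_half_dist_le {p : ℝ} (hp : 1 ≤ p) (hS : Bornology.IsBounded S) (hy : y ∈ S) :
    2 * (dist x y / 2) ^ p ≤ infDist x S ^ p + diam S ^ p :=
  calc
    2 * (dist x y / 2) ^ p ≤ 2 * ((infDist x S + diam S) / 2) ^ p := by
      gcongr
      exact dist_le_infDist_add_diam hS hy
    _ ≤ infDist x S ^ p + diam S ^ p := two_mul_rpow_half_add_le infDist_nonneg diam_nonneg hp

end Metric

/-- The function `A(w, v)` on a (pseudo)metric space: a proximal objective in `w` with base point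
`v`, in which `f w` carries the `v`-dependent weight `(f v + ϑ) / ϰ`. -/
noncomputable def proxObjective {X : Type*} [PseudoMetricSpace X] (ϰ ϑ : ℝ) (f : X → ℝ)
    (w v : X) : ℝ :=
  1 / ϰ * f w * (f v + ϑ) + dist v w ^ 2

section Growth

variable {X : Type*} [PseudoMetricSpace X] {ℓ ϰ p ϑ m : ℝ} {f : X → ℝ} {S T S₁ S₂ : Set X}
  {v v' w : X}

theorem two_mul_rpow_div_le_of_growth (hℓ : 0 < ℓ) (hϰ : 0 < ϰ) (hp : 1 ≤ p)
    (hS : Bornology.IsBounded S) (hgrow : ∀ u, ℓ * infDist u S ^ p ≤ f u - m)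
    (hϑ : ℓ * diam S ^ p - m ≤ ϑ) (hv' : v' ∈ S) :
    2 * ((infDist w S * dist v v') ^ p / (2 ^ p * ϰ / ℓ ^ 2)) ≤
      1 / ϰ * ((f w - m) * (f v + ϑ)) := by
  have hr : 0 ≤ infDist w S := infDist_nonneg
  have hweight : ℓ * (2 * (dist v v' / 2) ^ p) ≤ f v + ϑ := by
    have hdist := mul_le_mul_of_nonneg_left (two_mul_rpow_half_dist_le (x := v) hp hS hv') hℓ.le
    linarith [hgrow v]
  calc
    2 * ((infDist w S * dist v v') ^ p / (2 ^ p * ϰ / ℓ ^ 2))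
      = 1 / ϰ * ((ℓ * infDist w S ^ p) * (ℓ * (2 * (dist v v' / 2) ^ p))) := by
        rw [Real.mul_rpow hr dist_nonneg, Real.div_rpow dist_nonneg zero_le_two]
        field_simp
    _ ≤ 1 / ϰ * ((f w - m) * (f v + ϑ)) := by
        have hfw : 0 ≤ f w - m := le_trans (by positivity) (hgrow w)
        gcongr
        exact hgrow w

theorem proxObjective_sub_le (hℓ : 0 < ℓ) (hϰ : 0 < ϰ) (hp : 1 < p)
    (hS : Bornology.IsBounded S) (hgrow : ∀ u, ℓ * infDist u S ^ p ≤ f u - m)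
    (hϑ : ℓ * diam S ^ p - m ≤ ϑ) (hTS : T ⊆ S) (hv' : v' ∈ T) (hmin : IsMinOn (dist v) T v')
    (hfv' : f v' = m) (hw : infDist w T ≤ infDist w S) :
    proxObjective ϰ ϑ f v' v - 2 * (2 ^ p * ϰ / ℓ ^ 2) ^ (1 / (p - 1)) ≤
      proxObjective ϰ ϑ f w v := by
  have hinf : infDist w T = infDist w S := hw.antisymm (infDist_le_infDist_of_subset hTS ⟨v', hv'⟩)
  have hgain := two_mul_rpow_div_le_of_growth (v := v) (w := w) hℓ hϰ hp.le hS hgrow hϑ (hTS hv')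
  have hloss : dist v v' ^ 2 - 2 * (infDist w S * dist v v') ≤ dist v w ^ 2 := by
    rw [← infDist_eq_dist_of_isMinOn hv' hmin, ← hinf]
    exact sq_infDist_sub_le_sq_dist
  have hscalar := sub_rpow_div_le_rpow_one_div_s9 (K := 2 ^ p * ϰ / ℓ ^ 2)
    (x := infDist w S * dist v v') (by positivity) (mul_nonneg infDist_nonneg dist_nonneg) hp
  simp only [proxObjective, hfv']
  linarith

theorem stmt_9_general (hℓ : 0 < ℓ) (hϰ : 0 < ϰ) (hp : 1 < p) (hS : S = S₁ ∪ S₂)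
    (hSb : Bornology.IsBounded S) (hgrow : ∀ u, ℓ * infDist u S ^ p ≤ f u - m)
    (hϑ : ℓ * diam S ^ p - m ≤ ϑ) (hv' : v' ∈ S₁) (hmin : IsMinOn (dist v) S₁ v')
    (hfv' : f v' = m) :
    proxObjective ϰ ϑ f v' v - 2 * (2 ^ p * ϰ / ℓ ^ 2) ^ (1 / (p - 1)) ≤
        sInf ((proxObjective ϰ ϑ f · v) '' {w | infDist w S₁ ≤ infDist w S₂}) ∧
      sInf ((proxObjective ϰ ϑ f · v) '' {w | infDist w S₁ ≤ infDist w S₂}) ≤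
        proxObjective ϰ ϑ f v' v := by
  have hlower := Set.forall_mem_image.2 fun w (hw : infDist w S₁ ≤ infDist w S₂) =>
    proxObjective_sub_le hℓ hϰ hp hSb hgrow hϑ (hS ▸ Set.subset_union_left) hv' hmin hfv'
      (hS ▸ infDist_le_infDist_union ⟨v', hv'⟩ hw)
  have hcell : v' ∈ {w | infDist w S₁ ≤ infDist w S₂} :=
    (infDist_zero_of_mem hv').trans_le infDist_nonneg
  have hmem := Set.mem_image_of_mem (proxObjective ϰ ϑ f · v) hcell
  exact ⟨le_csInf ⟨_, hmem⟩ hlower, csInf_le ⟨_, hlower⟩ hmem⟩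

end Growth

/-- Localization of `inf_{w ∈ Zᵢ} A(w,v)` between `A(Vᵢ*(v),v) − 2(2^p ϰ/ℓ²)^{1/(p−1)}`
and `A(Vᵢ*(v),v)`. -/
theorem stmt_9 {d : ℕ} (hd : 1 ≤ d)
    (ℓ ϰ p ϑ fbar : ℝ) (hℓ : 0 < ℓ) (hϰ : 0 < ϰ) (hp1 : 1 < p) (hp2 : p ≤ 2)
    (f : EuclideanSpace ℝ (Fin d) → ℝ)
    (hfbar : IsGLB (Set.range f) fbar)
    (S S1 S2 : Set (EuclideanSpace ℝ (Fin d))) (hS : S = S1 ∪ S2)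
    (hS1ne : S1.Nonempty) (hS1comp : IsCompact S1) (hS1conv : Convex ℝ S1)
    (hS2ne : S2.Nonempty) (hS2comp : IsCompact S2) (hS2conv : Convex ℝ S2)
    (hfS : ∀ w ∈ S, f w = fbar)
    (hgrow : ∀ w, ℓ * Metric.infDist w S ^ p ≤ f w - fbar)
    (hϑ : ℓ * Metric.diam S ^ p - fbar ≤ ϑ)
    (Z1 Z2 : Set (EuclideanSpace ℝ (Fin d)))
    (hZ1 : Z1 = {w | Metric.infDist w S1 ≤ Metric.infDist w S2})
    (hZ2 : Z2 = {w | Metric.infDist w S2 ≤ Metric.infDist w S1})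
    (V1 V2 : EuclideanSpace ℝ (Fin d) → EuclideanSpace ℝ (Fin d))
    (hV1 : ∀ v, V1 v ∈ S1 ∧ ∀ y ∈ S1, ‖v - V1 v‖ ≤ ‖v - y‖)
    (hV2 : ∀ v, V2 v ∈ S2 ∧ ∀ y ∈ S2, ‖v - V2 v‖ ≤ ‖v - y‖)
    (A : EuclideanSpace ℝ (Fin d) → EuclideanSpace ℝ (Fin d) → ℝ)
    (hA : ∀ w v, A w v = (1/ϰ) * f w * (f v + ϑ) + ‖v - w‖^2) :
    ∀ v : EuclideanSpace ℝ (Fin d),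
      (A (V1 v) v - 2 * ((2:ℝ)^p * ϰ / ℓ^2) ^ ((1:ℝ)/(p-1))
          ≤ sInf ((fun w => A w v) '' Z1)
        ∧ sInf ((fun w => A w v) '' Z1) ≤ A (V1 v) v) ∧
      (A (V2 v) v - 2 * ((2:ℝ)^p * ϰ / ℓ^2) ^ ((1:ℝ)/(p-1))
          ≤ sInf ((fun w => A w v) '' Z2)
        ∧ sInf ((fun w => A w v) '' Z2) ≤ A (V2 v) v) := by
  subst hZ1 hZ2
  obtain rfl : A = proxObjective ϰ ϑ f := by
    funext w v
    rw [hA, proxObjective, dist_eq_norm]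
  have hSb : Bornology.IsBounded S := hS ▸ (hS1comp.union hS2comp).isBounded
  have hfV1 (v) : f (V1 v) = fbar := hfS _ (hS ▸ Or.inl (hV1 v).1)
  have hfV2 (v) : f (V2 v) = fbar := hfS _ (hS ▸ Or.inr (hV2 v).1)
  simp only [← dist_eq_norm] at hV1 hV2
  exact fun v => ⟨
    stmt_9_general hℓ hϰ hp1 hS hSb hgrow hϑ (hV1 v).1 (hV1 v).2 (hfV1 v),
    stmt_9_general hℓ hϰ hp1 (hS.trans (Set.union_comm S1 S2)) hSb hgrow hϑ
      (hV2 v).1 (hV2 v).2 (hfV2 v)⟩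
end

section
/- Let d ≥ 1, β > 0, α > 0, let g : ℝ^d → ℝ be continuous, v* ∈ ℝ^d, and let ρ be a Borel probability measure on ℝ^d with v* ∈ supp(ρ) and ∫ ‖v − v*‖ dρ(v) < ∞. Set g* := g(v*) and, for r > 0, g_r := sup_{v ∈ B_r(v*)} g(v) − g*. Suppose there exist η, ν > 0 such that g(v) − g* ≥ (η·‖v − v*‖)^{1/ν} − β for all v ∈ ℝ^d. Then for every r > 0 and every q > β: ‖v_α(ρ) − v*‖ ≤ (q + g_r)^ν / η + (e^{−α(q − β)} / ρ(B_r(v*))) · ∫ ‖v − v*‖ dρ(v). -/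
open MeasureTheory Metric

/-! The weighted mean `v_α` is the barycentre of the exponentially tilted probability measure
`ρ.tilted (-α g)`, so `‖v_α - v*‖` is at most the mean of `‖v - v*‖` under that measure. The points
within distance `R = (q + g_r) ^ ν / η` of `v*` contribute at most `R` to this mean. Beyond `R`,
inverse growth gives `g ≥ S + (q - β)`, where `S` is the supremum of `g` over `B_r(v*)`; as the
normalizing constant is at least `exp (-α S) ρ(B_r(v*))`, the tilted density with respect to `ρ` is
at most `exp (-α (q - β)) / ρ(B_r(v*))` there. -/

section Tilted

variable {Ω E : Type*} [MeasurableSpace Ω] {μ : Measure Ω} {f : Ω → ℝ}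
  [NormedAddCommGroup E] [NormedSpace ℝ E]

lemma integral_tilted_eq_inv_smul_integral (X : Ω → E) :
    ∫ ω, X ω ∂μ.tilted f = (∫ ω, Real.exp (f ω) ∂μ)⁻¹ • ∫ ω, Real.exp (f ω) • X ω ∂μ := by
  simp only [integral_tilted, div_eq_inv_mul, mul_smul, integral_smul]

lemma integrable_tilted_of_le {X : Ω → E} {K : ℝ}
    (hf : Integrable (fun ω => Real.exp (f ω)) μ) (hfK : ∀ ω, f ω ≤ K) (hX : Integrable X μ) :
    Integrable X (μ.tilted f) := by
  refine (integrable_tilted_iff hf X).2 (hX.bdd_smul (Real.exp K) hf.1 (.of_forall fun ω => ?_))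
  rw [Real.norm_of_nonneg (Real.exp_nonneg _)]
  exact Real.exp_le_exp.2 (hfK ω)

lemma measureReal_mul_exp_le_integral_exp {s : Set Ω} {c : ℝ}
    (hf : Integrable (fun ω => Real.exp (f ω)) μ) (hc : ∀ ω ∈ s, c ≤ f ω) :
    μ.real s * Real.exp c ≤ ∫ ω, Real.exp (f ω) ∂μ := by
  calc μ.real s * Real.exp c
      ≤ Real.exp c * μ.real {ω | Real.exp c ≤ Real.exp (f ω)} := by
        rw [mul_comm]
        gcongr
        · exact (hf.measure_ge_lt_top (Real.exp_pos c)).ne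
        · exact fun ω hω => Real.exp_le_exp.2 (hc ω hω)
    _ ≤ ∫ ω, Real.exp (f ω) ∂μ :=
        mul_meas_ge_le_integral_of_nonneg (.of_forall fun ω => Real.exp_nonneg _) hf _

lemma exp_div_integral_exp_le {s : Set Ω} {b c : ℝ} {ω : Ω}
    (hf : Integrable (fun ω => Real.exp (f ω)) μ) (hs : 0 < μ.real s)
    (hc : ∀ ω ∈ s, c ≤ f ω) (hω : f ω ≤ c - b) :
    Real.exp (f ω) / ∫ ω, Real.exp (f ω) ∂μ ≤ Real.exp (-b) / μ.real s := by
  calc Real.exp (f ω) / ∫ ω, Real.exp (f ω) ∂μ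
      ≤ Real.exp (c - b) / (μ.real s * Real.exp c) := by
        gcongr
        exact measureReal_mul_exp_le_integral_exp hf hc
    _ = Real.exp (-b) / μ.real s := by
        rw [sub_eq_add_neg, Real.exp_add]
        field_simp

lemma integral_tilted_le_add_mul_integral {h : Ω → ℝ} {R C : ℝ}
    (hf : Integrable (fun ω => Real.exp (f ω)) μ) (hh : Integrable h μ) (hh_nonneg : ∀ ω, 0 ≤ h ω)
    (hR : 0 ≤ R) (hC : 0 ≤ C)
    (hfar : ∀ ω, R < h ω → Real.exp (f ω) / ∫ ω, Real.exp (f ω) ∂μ ≤ C) :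
    ∫ ω, h ω ∂μ.tilted f ≤ R + C * ∫ ω, h ω ∂μ := by
  set p : Ω → ℝ := fun ω => Real.exp (f ω) / ∫ ω, Real.exp (f ω) ∂μ
  have hp_nonneg (ω : Ω) : 0 ≤ p ω := by positivity
  have hp : Integrable p μ := hf.div_const _
  have hp_le_one : ∫ ω, p ω ∂μ ≤ 1 := by
    rw [integral_div]
    exact div_self_le_one _
  have hpointwise (ω : Ω) : p ω * h ω ≤ R * p ω + C * h ω := by
    rcases le_or_gt (h ω) R with hnear | hR_lt
    · nlinarith [mul_le_mul_of_nonneg_left hnear (hp_nonneg ω), mul_nonneg hC (hh_nonneg ω)]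
    · nlinarith [mul_le_mul_of_nonneg_right (hfar ω hR_lt) (hh_nonneg ω),
        mul_nonneg hR (hp_nonneg ω)]
  calc ∫ ω, h ω ∂μ.tilted f
      = ∫ ω, p ω * h ω ∂μ := integral_tilted f h
    _ ≤ ∫ ω, R * p ω + C * h ω ∂μ :=
        integral_mono_of_nonneg (.of_forall fun ω => mul_nonneg (hp_nonneg ω) (hh_nonneg ω))
          ((hp.const_mul R).add (hh.const_mul C)) (.of_forall hpointwise)
    _ = R * ∫ ω, p ω ∂μ + C * ∫ ω, h ω ∂μ := by
        rw [integral_add (hp.const_mul R) (hh.const_mul C), integral_const_mul, integral_const_mul]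
    _ ≤ R + C * ∫ ω, h ω ∂μ := by
        gcongr
        exact mul_le_of_le_one_right hR hp_le_one

lemma norm_integral_sub_le [CompleteSpace E] [IsProbabilityMeasure μ] {X : Ω → E} {x : E}
    (hX : Integrable (fun ω => X ω - x) μ) :
    ‖∫ ω, X ω ∂μ - x‖ ≤ ∫ ω, ‖X ω - x‖ ∂μ := by
  have hmean : ∫ ω, X ω ∂μ - x = ∫ ω, (X ω - x) ∂μ := by
    have hX_add := integral_add hX (integrable_const x)
    simp only [sub_add_cancel, integral_const, probReal_univ, one_smul] at hX_add
    rw [hX_add, add_sub_cancel_right]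
  rw [hmean]
  exact norm_integral_le_integral_norm _

lemma norm_integral_tilted_sub_le [CompleteSpace E] {X : Ω → E} {x : E} {s : Set Ω}
    {b c K R : ℝ} (hf : Integrable (fun ω => Real.exp (f ω)) μ) (hfK : ∀ ω, f ω ≤ K)
    (hX : Integrable (fun ω => X ω - x) μ) (hs : 0 < μ.real s) (hc : ∀ ω ∈ s, c ≤ f ω)
    (hR : 0 ≤ R) (hfar : ∀ ω, R < ‖X ω - x‖ → f ω ≤ c - b) :
    ‖∫ ω, X ω ∂μ.tilted f - x‖ ≤ R + Real.exp (-b) / μ.real s * ∫ ω, ‖X ω - x‖ ∂μ := by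
  have : NeZero μ := ⟨fun hμ => by simp [hμ] at hs⟩
  have : IsProbabilityMeasure (μ.tilted f) := isProbabilityMeasure_tilted hf
  calc ‖∫ ω, X ω ∂μ.tilted f - x‖
      ≤ ∫ ω, ‖X ω - x‖ ∂μ.tilted f := norm_integral_sub_le (integrable_tilted_of_le hf hfK hX)
    _ ≤ R + Real.exp (-b) / μ.real s * ∫ ω, ‖X ω - x‖ ∂μ :=
        integral_tilted_le_add_mul_integral hf hX.norm (fun ω => norm_nonneg _) hR
          (by positivity) fun ω hω => exp_div_integral_exp_le hf hs hc (hfar ω hω)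

end Tilted

lemma lt_rpow_one_div_of_rpow_div_lt {t y η ν : ℝ} (ht : 0 ≤ t) (hη : 0 < η) (hν : 0 < ν)
    (hy : t ^ ν / η < y) : t < (η * y) ^ (1 / ν) := by
  have hpow : t ^ ν < η * y := (div_lt_iff₀' hη).1 hy
  rw [one_div]
  exact (Real.lt_rpow_inv_iff_of_pos ht ((Real.rpow_nonneg ht ν).trans hpow.le) hν).2 hpow

theorem stmt_10_general {E : Type*} [NormedAddCommGroup E] [NormedSpace ℝ E] [CompleteSpace E]
    [MeasurableSpace E] {ρ : Measure E} [IsFiniteMeasure ρ] {g : E → ℝ} {x : E} {s : Set E}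
    {α β η ν q : ℝ} (hα : 0 ≤ α) (hη : 0 < η) (hν : 0 < ν) (hq : β ≤ q)
    (hg : AEMeasurable g ρ) (hs : 0 < ρ s) (hgs : BddAbove (g '' s))
    (hmom : Integrable (fun v => v - x) ρ)
    (hgrow : ∀ v, (η * ‖v - x‖) ^ (1 / ν) - β ≤ g v - g x) :
    ‖∫ v, v ∂ρ.tilted (fun w => -α * g w) - x‖
      ≤ (q + (sSup (g '' s) - g x)) ^ ν / η
        + Real.exp (-α * (q - β)) / ρ.real s * ∫ v, ‖v - x‖ ∂ρ := by
  set S := sSup (g '' s)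
  have hS : ∀ v ∈ s, g v ≤ S := fun v hv => le_csSup hgs (Set.mem_image_of_mem g hv)
  have hs_real : 0 < ρ.real s := ENNReal.toReal_pos hs.ne' (measure_ne_top ρ s)
  have hlower (v : E) : g x - β ≤ g v := by
    have : 0 ≤ (η * ‖v - x‖) ^ (1 / ν) := by positivity
    linarith [hgrow v]
  have hlevel : 0 ≤ q + (S - g x) := by
    obtain ⟨v, hv⟩ := nonempty_of_measure_ne_zero hs.ne'
    linarith [hS v hv, hlower v]
  have hweight_le (v : E) : -α * g v ≤ -α * (g x - β) :=
    mul_le_mul_of_nonpos_left (hlower v) (neg_nonpos.2 hα)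
  have hweight : Integrable (fun v => Real.exp (-α * g v)) ρ := by
    simpa only [Pi.neg_apply, mul_neg, neg_mul] using
      ProbabilityTheory.integrable_exp_mul_of_le α (-(g x - β)) hα hg.neg
        (.of_forall fun v => neg_le_neg (hlower v))
  have hfar (v : E) (hv : (q + (S - g x)) ^ ν / η < ‖v - x‖) :
      -α * g v ≤ -α * S - α * (q - β) := by
    have hroot := lt_rpow_one_div_of_rpow_div_lt hlevel hη hν hv
    have hgap : S + (q - β) ≤ g v := by linarith [hgrow v]
    linarith [mul_le_mul_of_nonneg_left hgap hα]
  rw [neg_mul α (q - β)]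
  exact norm_integral_tilted_sub_le hweight hweight_le hmom hs_real
    (fun v hv => mul_le_mul_of_nonpos_left (hS v hv) (neg_nonpos.2 hα)) (by positivity) hfar

/-- Quantitative Laplace principle, first part (Lemma `lem:qlp`). Membership of `v*` in
the support of `ρ` is expressed by positivity of the mass of all closed balls about
`v*`. -/
theorem stmt_10 {d : ℕ} (hd : 1 ≤ d)
    (β α η ν : ℝ) (hβ : 0 < β) (hα : 0 < α) (hη : 0 < η) (hν : 0 < ν)
    (g : EuclideanSpace ℝ (Fin d) → ℝ) (hg : Continuous g)
    (vstar : EuclideanSpace ℝ (Fin d))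
    (ρ : Measure (EuclideanSpace ℝ (Fin d))) (hρ : IsProbabilityMeasure ρ)
    (hsupp : ∀ r > (0:ℝ), 0 < ρ (Metric.closedBall vstar r))
    (hmom : Integrable (fun v => ‖v - vstar‖) ρ)
    (hgrow : ∀ v, (η * ‖v - vstar‖) ^ ((1:ℝ)/ν) - β ≤ g v - g vstar)
    (vα : EuclideanSpace ℝ (Fin d))
    (hvα : vα = (∫ w, Real.exp (-α * g w) ∂ρ)⁻¹ • ∫ w, Real.exp (-α * g w) • w ∂ρ) :
    ∀ r > (0:ℝ), ∀ q > β,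
      ‖vα - vstar‖
        ≤ (q + (sSup (g '' Metric.closedBall vstar r) - g vstar)) ^ ν / η
          + (Real.exp (-α * (q - β)) / (ρ (Metric.closedBall vstar r)).toReal)
            * ∫ v, ‖v - vstar‖ ∂ρ := by
  intro r hr q hq
  rw [hvα, ← integral_tilted_eq_inv_smul_integral]
  exact stmt_10_general hα.le hη hν hq.le hg.aemeasurable (hsupp r hr)
    ((isCompact_closedBall vstar r).bddAbove_image hg.continuousOn)
    ((integrable_norm_iff (by fun_prop)).1 hmom) hgrow
end

section
/- Let d ≥ 1, β > 0, α > 0, let g : ℝ^d → ℝ be continuous, v* ∈ ℝ^d, and let ρ be a Borel probability measure on ℝ^d with v* ∈ supp(ρ) and ∫ ‖v − v*‖ dρ(v) < ∞. Set g* := g(v*) and, for r > 0, g_r := sup_{v ∈ B_r(v*)} g(v) − g*. Suppose there exist g_∞ > 0, R₀ > 0, η > 0 and ν ∈ (0,∞) such that g(v) − g* ≥ (η·‖v − v*‖)^{1/ν} − β for all v ∈ B_{R₀}(v*), and g(v) − g* > g_∞ for all v ∉ B_{R₀}(v*). Then for every r ∈ (0, R₀] and every q > β with q − β + g_r ≤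 g_∞: ‖v_α(ρ) − v*‖ ≤ (q + g_r)^ν / η + (e^{−α(q − β)} / ρ(B_r(v*))) · ∫ ‖v − v*‖ dρ(v). -/
open MeasureTheory Metric

/-!
The weighted mean `v_α(ρ)` is the barycenter of the Gibbs measure `π ∝ e^{-αg} ρ`, which is
`ρ.tilted (-α * g)`, so its distance to `v*` is at most `∫ ‖w - v*‖ dπ`. The growth condition says
that a point farther than `A = (q + g_r)^ν / η` from `v*` has `g - g* ≥ q - β + g_r`. Points within
`A` contribute at most `A` to the integral; at the others the unnormalized weight is at most
`e^{-α(g* + q - β + g_r)}`, while the normalizing constant is at least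
`e^{-α(g* + g_r)} ρ(B_r(v*))`, as `g ≤ g* + g_r` on `B_r(v*)`.
-/

section Tilted

variable {Ω E : Type*} [MeasurableSpace Ω] {ρ : Measure Ω} {u : Ω → ℝ} {C : ℝ}
  [NormedAddCommGroup E] [NormedSpace ℝ E]

lemma inv_integral_exp_smul_integral_eq_integral_tilted (X : Ω → E) :
    (∫ ω, Real.exp (u ω) ∂ρ)⁻¹ • ∫ ω, Real.exp (u ω) • X ω ∂ρ = ∫ ω, X ω ∂ρ.tilted u := by
  rw [integral_tilted, ← integral_smul]
  simp only [smul_smul, div_eq_inv_mul]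

lemma norm_integral_sub_le_integral_norm_sub [CompleteSpace E] [IsProbabilityMeasure ρ]
    {X : Ω → E} (hX : Integrable X ρ) (a : E) :
    ‖∫ ω, X ω ∂ρ - a‖ ≤ ∫ ω, ‖X ω - a‖ ∂ρ := by
  have h_sub : ∫ ω, X ω ∂ρ - a = ∫ ω, (X ω - a) ∂ρ := by
    rw [integral_sub hX (integrable_const a), integral_const, probReal_univ, one_smul]
  rw [h_sub]
  exact norm_integral_le_integral_norm _

variable [IsFiniteMeasure ρ]

lemma integrable_exp_of_le (hu : AEMeasurable u ρ) (hC : ∀ᵐ ω ∂ρ, u ω ≤ C) :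
    Integrable (fun ω ↦ Real.exp (u ω)) ρ := by
  simpa only [one_mul] using
    ProbabilityTheory.integrable_exp_mul_of_le 1 C zero_le_one hu hC

lemma integrable_tilted_of_le_s11 (hu : AEMeasurable u ρ) (hC : ∀ᵐ ω ∂ρ, u ω ≤ C) {X : Ω → E}
    (hX : Integrable X ρ) : Integrable X (ρ.tilted u) := by
  have hexp := integrable_exp_of_le hu hC
  refine (integrable_tilted_iff hexp X).mpr
    (hX.bdd_smul (Real.exp C) hexp.aestronglyMeasurable ?_)
  filter_upwards [hC] with ω hω
  rwa [Real.norm_of_nonneg (Real.exp_nonneg _), Real.exp_le_exp]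

lemma exp_mul_measureReal_le_integral_exp (hu : Integrable (fun ω ↦ Real.exp (u ω)) ρ)
    {B : Set Ω} {s : ℝ} (hB : ∀ ω ∈ B, s ≤ u ω) :
    Real.exp s * ρ.real B ≤ ∫ ω, Real.exp (u ω) ∂ρ :=
  calc Real.exp s * ρ.real B
      ≤ Real.exp s * ρ.real {ω | Real.exp s ≤ Real.exp (u ω)} := by
        gcongr
        exacts [measure_ne_top _ _, fun ω hω ↦ Real.exp_le_exp.mpr (hB ω hω)]
    _ ≤ ∫ ω, Real.exp (u ω) ∂ρ :=
        mul_meas_ge_le_integral_of_nonneg (.of_forall fun _ ↦ Real.exp_nonneg _) hu _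

lemma integral_tilted_le_add (hu : Integrable (fun ω ↦ Real.exp (u ω)) ρ) {f : Ω → ℝ}
    (hf : Integrable f ρ) (hf_nonneg : 0 ≤ f) {A s t : ℝ} {B : Set Ω} (hA : 0 ≤ A)
    (hB : ρ B ≠ 0) (hs : ∀ ω ∈ B, s ≤ u ω) (ht : ∀ ω, A < f ω → u ω ≤ t) :
    ∫ ω, f ω ∂ρ.tilted u ≤ A + Real.exp (t - s) / ρ.real B * ∫ ω, f ω ∂ρ := by
  set Z := ∫ ω, Real.exp (u ω) ∂ρ with hZ
  have hB_pos : 0 < ρ.real B := ENNReal.toReal_pos hB (measure_ne_top _ _)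
  have hZ_ge : Real.exp s * ρ.real B ≤ Z := exp_mul_measureReal_le_integral_exp hu hs
  have hZ_pos : 0 < Z := lt_of_lt_of_le (by positivity) hZ_ge
  have h_nonneg : ∀ ω, 0 ≤ Real.exp (u ω) * f ω := fun ω ↦
    mul_nonneg (Real.exp_nonneg _) (hf_nonneg ω)
  have h_pointwise : ∀ ω, Real.exp (u ω) * f ω ≤ A * Real.exp (u ω) + Real.exp t * f ω := by
    intro ω
    have hfω : 0 ≤ f ω := hf_nonneg ω
    rcases le_or_gt (f ω) A with h_near | h_far
    · rw [mul_comm]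
      exact le_add_of_le_of_nonneg (by gcongr) (by positivity)
    · exact le_add_of_nonneg_of_le (by positivity) (by gcongr; exact ht ω h_far)
  have h_int : ∫ ω, Real.exp (u ω) * f ω ∂ρ ≤ A * Z + Real.exp t * ∫ ω, f ω ∂ρ := by
    rw [hZ, ← integral_const_mul, ← integral_const_mul,
      ← integral_add (hu.const_mul A) (hf.const_mul _)]
    exact integral_mono_of_nonneg (.of_forall h_nonneg)
      ((hu.const_mul A).add (hf.const_mul _)) (.of_forall h_pointwise)
  have hf_int : 0 ≤ ∫ ω, f ω ∂ρ := integral_nonneg hf_nonneg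
  calc ∫ ω, f ω ∂ρ.tilted u
      = Z⁻¹ * ∫ ω, Real.exp (u ω) * f ω ∂ρ :=
        (inv_integral_exp_smul_integral_eq_integral_tilted f).symm
    _ ≤ Z⁻¹ * (A * Z + Real.exp t * ∫ ω, f ω ∂ρ) := by gcongr
    _ = A + Real.exp t / Z * ∫ ω, f ω ∂ρ := by field_simp
    _ ≤ A + Real.exp t / (Real.exp s * ρ.real B) * ∫ ω, f ω ∂ρ := by gcongr
    _ = A + Real.exp (t - s) / ρ.real B * ∫ ω, f ω ∂ρ := by rw [Real.exp_sub, div_div]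

lemma norm_integral_tilted_sub_le_s11 [CompleteSpace E] (hu : AEMeasurable u ρ)
    (hC : ∀ᵐ ω ∂ρ, u ω ≤ C) {X : Ω → E} (hX : Integrable X ρ) {a : E} {A s t : ℝ} {B : Set Ω}
    (hA : 0 ≤ A) (hB : ρ B ≠ 0) (hs : ∀ ω ∈ B, s ≤ u ω) (ht : ∀ ω, A < ‖X ω - a‖ → u ω ≤ t) :
    ‖∫ ω, X ω ∂ρ.tilted u - a‖ ≤ A + Real.exp (t - s) / ρ.real B * ∫ ω, ‖X ω - a‖ ∂ρ := by
  have : NeZero ρ := ⟨fun h ↦ hB (by rw [h, Measure.coe_zero, Pi.zero_apply])⟩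
  have hexp := integrable_exp_of_le hu hC
  have := isProbabilityMeasure_tilted hexp
  exact (norm_integral_sub_le_integral_norm_sub (integrable_tilted_of_le_s11 hu hC hX) a).trans
    (integral_tilted_le_add hexp (hX.sub (integrable_const a)).norm (fun _ ↦ norm_nonneg _)
      hA hB hs ht)

end Tilted

section Growth

variable {E : Type*} [SeminormedAddCommGroup E] {g : E → ℝ} {a : E} {β η ν ginf R : ℝ}

lemma neg_le_sub_of_rpow_growth (hη : 0 ≤ η)
    (hgrow : ∀ v ∈ closedBall a R, (η * ‖v - a‖) ^ ((1 : ℝ) / ν) - β ≤ g v - g a)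
    (hout : ∀ v ∉ closedBall a R, ginf < g v - g a) (hginf : -β ≤ ginf) (w : E) :
    -β ≤ g w - g a := by
  by_cases hw : w ∈ closedBall a R
  · have h_nonneg : 0 ≤ (η * ‖w - a‖) ^ ((1 : ℝ) / ν) := by positivity
    linarith [hgrow w hw]
  · exact hginf.trans (hout w hw).le

lemma sub_le_sub_of_rpow_div_lt_norm (hη : 0 < η) (hν : 0 < ν)
    (hgrow : ∀ v ∈ closedBall a R, (η * ‖v - a‖) ^ ((1 : ℝ) / ν) - β ≤ g v - g a)
    (hout : ∀ v ∉ closedBall a R, ginf < g v - g a) {p : ℝ} (hp : 0 ≤ p) (hpg : p - β ≤ ginf)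
    {w : E} (hw : p ^ ν / η < ‖w - a‖) : p - β ≤ g w - g a := by
  by_cases hwR : w ∈ closedBall a R
  · have h_lt : p < (η * ‖w - a‖) ^ ((1 : ℝ) / ν) := by
      rw [one_div, Real.lt_rpow_inv_iff_of_pos hp (by positivity) hν]
      exact (div_lt_iff₀' hη).mp hw
    linarith [hgrow w hwR]
  · exact hpg.trans (hout w hwR).le

end Growth

theorem stmt_11_general {E : Type*} [NormedAddCommGroup E] [NormedSpace ℝ E] [CompleteSpace E]
    [MeasurableSpace E] {ρ : Measure E} [IsFiniteMeasure ρ] {g : E → ℝ} (hg : AEMeasurable g ρ)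
    (hmom : Integrable (fun v ↦ v) ρ) {a : E} {α β η ν ginf R r q M : ℝ} (hα : 0 ≤ α)
    (hβ : 0 ≤ β) (hη : 0 < η) (hν : 0 < ν)
    (hgrow : ∀ v ∈ closedBall a R, (η * ‖v - a‖) ^ ((1 : ℝ) / ν) - β ≤ g v - g a)
    (hout : ∀ v ∉ closedBall a R, ginf < g v - g a)
    (hball : ρ (closedBall a r) ≠ 0) (hM : ∀ v ∈ closedBall a r, g v - g a ≤ M)
    (hq : β ≤ q) (hqM : q - β + M ≤ ginf) :
    ‖(∫ w, Real.exp (-α * g w) ∂ρ)⁻¹ • ∫ w, Real.exp (-α * g w) • w ∂ρ - a‖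
      ≤ (q + M) ^ ν / η
        + Real.exp (-α * (q - β)) / ρ.real (closedBall a r) * ∫ v, ‖v - a‖ ∂ρ := by
  have hr : 0 ≤ r := nonempty_closedBall.mp (nonempty_of_measure_ne_zero hball)
  have hM_nonneg : 0 ≤ M := by simpa only [sub_self] using hM a (mem_closedBall_self hr)
  have hqM_nonneg : 0 ≤ q + M := by linarith
  have hlow := neg_le_sub_of_rpow_growth hη.le hgrow hout (by linarith)
  have hfar : ∀ w, (q + M) ^ ν / η < ‖w - a‖ → q + M - β ≤ g w - g a := fun w hw ↦
    sub_le_sub_of_rpow_div_lt_norm hη hν hgrow hout hqM_nonneg (by linarith) hw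
  have h_anti : ∀ {x y : ℝ}, x ≤ y → -α * y ≤ -α * x := fun h ↦
    mul_le_mul_of_nonpos_left h (neg_nonpos.mpr hα)
  have h_exponent : -α * (g a + (q + M - β)) - -α * (g a + M) = -α * (q - β) := by ring
  rw [inv_integral_exp_smul_integral_eq_integral_tilted, ← h_exponent]
  exact norm_integral_tilted_sub_le_s11 (hg.const_mul _)
    (.of_forall fun w ↦ h_anti (le_sub_iff_add_le'.mp (hlow w))) hmom (by positivity) hball
    (fun w hw ↦ h_anti (sub_le_iff_le_add'.mp (hM w hw)))
    (fun w hw ↦ h_anti (le_sub_iff_add_le'.mp (hfar w hw)))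

/-- Quantitative Laplace principle, second (localized) part (Lemma `lem:qlp`). -/
theorem stmt_11 {d : ℕ} (hd : 1 ≤ d)
    (β α η ν ginf R0 : ℝ) (hβ : 0 < β) (hα : 0 < α) (hη : 0 < η) (hν : 0 < ν)
    (hginf : 0 < ginf) (hR0 : 0 < R0)
    (g : EuclideanSpace ℝ (Fin d) → ℝ) (hg : Continuous g)
    (vstar : EuclideanSpace ℝ (Fin d))
    (ρ : Measure (EuclideanSpace ℝ (Fin d))) (hρ : IsProbabilityMeasure ρ)
    (hsupp : ∀ r > (0:ℝ), 0 < ρ (Metric.closedBall vstar r))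
    (hmom : Integrable (fun v => ‖v - vstar‖) ρ)
    (hgrow : ∀ v ∈ Metric.closedBall vstar R0,
      (η * ‖v - vstar‖) ^ ((1:ℝ)/ν) - β ≤ g v - g vstar)
    (hout : ∀ v ∉ Metric.closedBall vstar R0, ginf < g v - g vstar)
    (vα : EuclideanSpace ℝ (Fin d))
    (hvα : vα = (∫ w, Real.exp (-α * g w) ∂ρ)⁻¹ • ∫ w, Real.exp (-α * g w) • w ∂ρ) :
    ∀ r : ℝ, 0 < r → r ≤ R0 → ∀ q > β,
      q - β + (sSup (g '' Metric.closedBall vstar r) - g vstar) ≤ ginf →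
      ‖vα - vstar‖
        ≤ (q + (sSup (g '' Metric.closedBall vstar r) - g vstar)) ^ ν / η
          + (Real.exp (-α * (q - β)) / (ρ (Metric.closedBall vstar r)).toReal)
            * ∫ v, ‖v - vstar‖ ∂ρ := by
  intro r hr _ q hq hqM
  have hid : Integrable (fun v ↦ v) ρ := by
    simpa only [Pi.add_def, sub_add_cancel] using
      ((integrable_norm_iff (by fun_prop)).mp hmom).add (integrable_const vstar)
  have hbdd : BddAbove (g '' closedBall vstar r) :=
    ((isCompact_closedBall vstar r).image hg).bddAbove
  rw [hvα]
  exact stmt_11_general hg.aemeasurable hid hα.le hβ.le hη hν hgrow hout (hsupp r hr).ne'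
    (fun v hv ↦ sub_le_sub_right (le_csSup hbdd ⟨v, hv, rfl⟩) _) hq.le hqM
end

section
/- Let d ≥ 1, β > 0, α > 0, η, ν > 0, and let Z₁, Z₂ ⊆ ℝ^d with Z₁ ∪ Z₂ = ℝ^d. Let g : ℝ^d → ℝ be continuous, v₁* ∈ Z₁ and v₂* ∈ Z₂, and suppose g(v) − g(v₁*) ≥ (η·‖v − v₁*‖)^{1/ν} − β for all v ∈ Z₁ and g(v) − g(v₂*) ≥ (η·‖v − v₂*‖)^{1/ν} − β for all v ∈ Z₂. For r > 0 set g_r := max{ sup_{v∈B_r(v₁*)} g(v) − g(v₁*), sup_{v∈B_r(v₂*)} g(v) − g(v₂*) }. Let ρ be a Borel probability measure on ℝ^d with ρ(B_r(v₁*)) > 0, ρ(B_r(v₂*)) > 0 and finite first moment. Then for each i ∈ {1,2} and all r > 0, q > β such that the sphere of radius q + g_r about v₁* meets the closure of Z₁ and the sphere of radius q + g_r about v₂* meets the closure of Z₂: ‖v_α(ρ) − vᵢ*‖ ≤ ‖v₁* − v₂*‖ + 2·(q + g_r)^ν/η + (e^{−α(q−β)} / min{ρ(B_r(v₁*)), ρ(B_r(v₂*))})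 · ( ∫ ‖w − vᵢ*‖ dρ(w) + ‖v₁* − v₂*‖ ). -/
open MeasureTheory Metric

/-!
The weighted mean is the mean of the Gibbs measure `ρ.tilted (-α g)`. A point `w` farther than
`(q + s) ^ ν / η` from the centre `v` of its zone satisfies `g w > (g v + s) + (q - β)` by inverse
growth, whereas `g ≤ g v + s` on a neighbourhood of `v` of mass at least `m`. This neighbourhood
alone forces the partition function to be so large that the Gibbs density at `w` is at most
`exp (-α (q - β)) / m`. Hence the Gibbs average of the distance to a point `c` is at most the
largest distance from `c` to a point near some centre, plus that density bound times the
`ρ`-average of the distance to `c`.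
-/

section Tilted

variable {Ω F : Type*} [MeasurableSpace Ω] {μ : Measure Ω} {f : Ω → ℝ}
  [NormedAddCommGroup F] [NormedSpace ℝ F]

lemma integrable_exp_neg_mul_of_bddBelow [IsFiniteMeasure μ] {α : ℝ} (hα : 0 ≤ α)
    (hf : AEMeasurable f μ) (hbdd : BddBelow (Set.range f)) :
    Integrable (fun x ↦ Real.exp (-α * f x)) μ := by
  obtain ⟨b, hb⟩ := hbdd
  simpa only [Pi.neg_apply, neg_mul, mul_neg] using
    ProbabilityTheory.integrable_exp_mul_of_le α (-b) hα hf.neg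
      (.of_forall fun x ↦ neg_le_neg (hb (Set.mem_range_self x)))

lemma exp_mul_measureReal_le_integral_exp_s12 (hf : Integrable (fun x ↦ Real.exp (f x)) μ)
    {s : Set Ω} {M : ℝ} (hM : ∀ x ∈ s, M ≤ f x) :
    Real.exp M * μ.real s ≤ ∫ x, Real.exp (f x) ∂μ := by
  have hfin : μ {x | Real.exp M ≤ Real.exp (f x)} ≠ ⊤ := by
    simpa only [Real.norm_of_nonneg (Real.exp_pos _).le]
      using (hf.measure_norm_ge_lt_top (Real.exp_pos M)).ne
  calc Real.exp M * μ.real s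
      ≤ Real.exp M * μ.real {x | Real.exp M ≤ Real.exp (f x)} := by
        gcongr
        exact fun x hx ↦ Real.exp_le_exp.2 (hM x hx)
    _ ≤ ∫ x, Real.exp (f x) ∂μ :=
        mul_meas_ge_le_integral_of_nonneg (.of_forall fun x ↦ (Real.exp_pos _).le) hf _

lemma exp_div_integral_exp_le_s12 (hf : Integrable (fun x ↦ Real.exp (f x)) μ) {s : Set Ω}
    {m M a : ℝ} (hm : 0 < m) (hms : m ≤ μ.real s) (hM : ∀ x ∈ s, M ≤ f x)
    {y : Ω} (hy : f y ≤ M + a) :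
    Real.exp (f y) / ∫ x, Real.exp (f x) ∂μ ≤ Real.exp a / m := by
  have hlower : Real.exp M * m ≤ ∫ x, Real.exp (f x) ∂μ :=
    (by gcongr : Real.exp M * m ≤ Real.exp M * μ.real s).trans
      (exp_mul_measureReal_le_integral_exp_s12 hf hM)
  calc Real.exp (f y) / ∫ x, Real.exp (f x) ∂μ
      ≤ Real.exp (M + a) / (Real.exp M * m) := by gcongr
    _ = Real.exp a / m := by rw [Real.exp_add, mul_div_mul_left _ _ (Real.exp_ne_zero M)]

lemma mul_le_mul_add_mul_of_le_or_le {p t K C : ℝ} (hp : 0 ≤ p) (ht : 0 ≤ t) (hK : 0 ≤ K)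
    (hC : 0 ≤ C) (h : t ≤ K ∨ p ≤ C) : p * t ≤ p * K + C * t := by
  rcases h with h | h
  · exact le_add_of_le_of_nonneg (by gcongr) (by positivity)
  · exact le_add_of_nonneg_of_le (by positivity) (by gcongr)

variable {X : Ω → F} {K C : ℝ}

lemma norm_density_smul_le (hK : 0 ≤ K) (hC : 0 ≤ C)
    (h : ∀ x, ‖X x‖ ≤ K ∨ Real.exp (f x) / ∫ y, Real.exp (f y) ∂μ ≤ C) (x : Ω) :
    ‖(Real.exp (f x) / ∫ y, Real.exp (f y) ∂μ) • X x‖ ≤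
      Real.exp (f x) / (∫ y, Real.exp (f y) ∂μ) * K + C * ‖X x‖ := by
  have hdensity : 0 ≤ Real.exp (f x) / ∫ y, Real.exp (f y) ∂μ := by positivity
  rw [norm_smul, Real.norm_of_nonneg hdensity]
  exact mul_le_mul_add_mul_of_le_or_le hdensity (norm_nonneg _) hK hC (h x)

lemma norm_integral_tilted_le (hf : Integrable (fun x ↦ Real.exp (f x)) μ) (hX : Integrable X μ)
    (hK : 0 ≤ K) (hC : 0 ≤ C)
    (h : ∀ x, ‖X x‖ ≤ K ∨ Real.exp (f x) / ∫ y, Real.exp (f y) ∂μ ≤ C) :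
    ‖∫ x, X x ∂μ.tilted f‖ ≤ K + C * ∫ x, ‖X x‖ ∂μ := by
  have hdensity := (hf.div_const (∫ y, Real.exp (f y) ∂μ)).mul_const K
  calc ‖∫ x, X x ∂μ.tilted f‖
      ≤ ∫ x, (Real.exp (f x) / (∫ y, Real.exp (f y) ∂μ) * K + C * ‖X x‖) ∂μ := by
        rw [integral_tilted]
        exact norm_integral_le_of_norm_le (hdensity.add (hX.norm.const_mul C))
          (.of_forall (norm_density_smul_le hK hC h))
    _ = (∫ y, Real.exp (f y) ∂μ) / (∫ y, Real.exp (f y) ∂μ) * K + C * ∫ x, ‖X x‖ ∂μ := by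
        rw [integral_add hdensity (hX.norm.const_mul C), integral_mul_const, integral_div,
          integral_const_mul]
    _ ≤ K + C * ∫ x, ‖X x‖ ∂μ := by
        gcongr
        exact mul_le_of_le_one_left hK (div_self_le_one _)

lemma integral_tilted_eq_inv_smul (X : Ω → F) :
    ∫ x, X x ∂μ.tilted f =
      (∫ x, Real.exp (f x) ∂μ)⁻¹ • ∫ x, Real.exp (f x) • X x ∂μ := by
  simp_rw [integral_tilted, div_eq_inv_mul, mul_smul, integral_smul]

lemma integrable_tilted_of_norm_le_or_density_le [NeZero μ]
    (hf : Integrable (fun x ↦ Real.exp (f x)) μ) (hX : Integrable X μ) (hK : 0 ≤ K) (hC : 0 ≤ C)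
    (h : ∀ x, ‖X x‖ ≤ K ∨ Real.exp (f x) / ∫ y, Real.exp (f y) ∂μ ≤ C) :
    Integrable X (μ.tilted f) := by
  have hsmul : Integrable (fun x ↦ (Real.exp (f x) / ∫ y, Real.exp (f y) ∂μ) • X x) μ :=
    (((hf.div_const _).mul_const K).add (hX.norm.const_mul C)).mono'
      ((hf.div_const _).aestronglyMeasurable.smul hX.aestronglyMeasurable)
      (.of_forall (norm_density_smul_le hK hC h))
  simp_rw [div_eq_inv_mul, mul_smul] at hsmul
  rw [integrable_tilted_iff hf]
  exact (integrable_fun_smul_iff (inv_ne_zero (integral_exp_pos hf).ne') _).1 hsmul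

end Tilted

section InverseGrowth

variable {E : Type*} [NormedAddCommGroup E] {g : E → ℝ} {α β η ν : ℝ}

lemma le_rpow_div_of_mul_rpow_le {t a : ℝ} (hη : 0 < η) (hν : 0 < ν) (ht : 0 ≤ t)
    (h : (η * t) ^ ((1 : ℝ) / ν) ≤ a) : t ≤ a ^ ν / η := by
  have ha : 0 ≤ a := (by positivity : 0 ≤ (η * t) ^ ((1 : ℝ) / ν)).trans h
  rw [le_div_iff₀' hη]
  rwa [one_div, Real.rpow_inv_le_iff_of_pos (by positivity) ha hν] at h

lemma bddBelow_range_of_inverse_growth {S : Set E} (hη : 0 ≤ η)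
    (hgrow : ∀ w, ∃ v ∈ S, (η * ‖w - v‖) ^ ((1 : ℝ) / ν) - β ≤ g w - g v)
    (hS : BddBelow (g '' S)) : BddBelow (Set.range g) := by
  obtain ⟨b, hb⟩ := hS
  refine ⟨b - β, Set.forall_mem_range.2 fun w ↦ ?_⟩
  obtain ⟨v, hv, hwv⟩ := hgrow w
  have hpow : 0 ≤ (η * ‖w - v‖) ^ ((1 : ℝ) / ν) := by positivity
  linarith [hb (Set.mem_image_of_mem g hv)]

variable [NormedSpace ℝ E] [CompleteSpace E] [MeasurableSpace E] {ρ : Measure E}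

theorem norm_integral_tilted_sub_le_of_inverse_growth {S : Set E} {U : E → Set E} {c : E}
    {q s m L : ℝ} (hα : 0 ≤ α) (hη : 0 < η) (hν : 0 < ν) (hqs : 0 ≤ q + s) (hm : 0 < m)
    (hexp : Integrable (fun w ↦ Real.exp (-α * g w)) ρ) (hmom : Integrable (fun w ↦ w - c) ρ)
    (hgrow : ∀ w, ∃ v ∈ S, (η * ‖w - v‖) ^ ((1 : ℝ) / ν) - β ≤ g w - g v)
    (hU : ∀ v ∈ S, ∀ w ∈ U v, g w ≤ g v + s) (hmass : ∀ v ∈ S, m ≤ ρ.real (U v))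
    (hc : ∀ v ∈ S, ‖v - c‖ ≤ L) :
    ‖(∫ w, w ∂ρ.tilted fun w ↦ -α * g w) - c‖ ≤
      L + (q + s) ^ ν / η + Real.exp (-α * (q - β)) / m * ∫ w, ‖w - c‖ ∂ρ := by
  obtain ⟨v₀, hv₀, -⟩ := hgrow 0
  have hL : 0 ≤ L := (norm_nonneg _).trans (hc v₀ hv₀)
  have : NeZero ρ := ⟨fun hρ ↦ by simpa [hρ] using hm.trans_le (hmass v₀ hv₀)⟩
  have hK : 0 ≤ L + (q + s) ^ ν / η := by positivity
  have hC : 0 ≤ Real.exp (-α * (q - β)) / m := by positivity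
  have hnear_or_small (w : E) : ‖w - c‖ ≤ L + (q + s) ^ ν / η ∨
      Real.exp (-α * g w) / ∫ w, Real.exp (-α * g w) ∂ρ ≤ Real.exp (-α * (q - β)) / m := by
    obtain ⟨v, hv, hwv⟩ := hgrow w
    rcases le_total (g w) (g v + s + (q - β)) with hlow | hhigh
    · left
      have hdist : ‖w - v‖ ≤ (q + s) ^ ν / η :=
        le_rpow_div_of_mul_rpow_le hη hν (norm_nonneg _) (by linarith)
      linarith [norm_sub_le_norm_sub_add_norm_sub w v c, hc v hv]
    · right
      exact exp_div_integral_exp_le_s12 hexp hm (hmass v hv) (M := -α * (g v + s))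
        (fun x hx ↦ mul_le_mul_of_nonpos_left (hU v hv x hx) (neg_nonpos.2 hα))
        (by simpa only [mul_add] using mul_le_mul_of_nonpos_left hhigh (neg_nonpos.2 hα))
  have := isProbabilityMeasure_tilted hexp
  have hsub := integrable_tilted_of_norm_le_or_density_le hexp hmom hK hC hnear_or_small
  have hmean : (∫ w, w ∂ρ.tilted fun w ↦ -α * g w) - c =
      ∫ w, (w - c) ∂ρ.tilted fun w ↦ -α * g w := by
    have hid := hsub.add (integrable_const c)
    simp only [Pi.add_def, sub_add_cancel] at hid
    rw [integral_sub hid (integrable_const c), integral_const, probReal_univ, one_smul]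
  rw [hmean]
  exact norm_integral_tilted_le hexp hmom hK hC hnear_or_small

theorem stmt_12_general [IsFiniteMeasure ρ] {Z1 Z2 : Set E} {v1 v2 : E} {q r s : ℝ}
    (hα : 0 ≤ α) (hη : 0 < η) (hν : 0 < ν) (hq : 0 ≤ q)
    (hZ : Z1 ∪ Z2 = Set.univ) (hg : AEMeasurable g ρ)
    (hgrow1 : ∀ v ∈ Z1, (η * ‖v - v1‖) ^ ((1 : ℝ) / ν) - β ≤ g v - g v1)
    (hgrow2 : ∀ v ∈ Z2, (η * ‖v - v2‖) ^ ((1 : ℝ) / ν) - β ≤ g v - g v2)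
    (hbdd1 : BddAbove (g '' closedBall v1 r)) (hbdd2 : BddAbove (g '' closedBall v2 r))
    (hs : s = max (sSup (g '' closedBall v1 r) - g v1) (sSup (g '' closedBall v2 r) - g v2))
    (hmom : Integrable (fun w ↦ w) ρ)
    (hρ1 : 0 < ρ (closedBall v1 r)) (hρ2 : 0 < ρ (closedBall v2 r)) :
    ∀ c ∈ ({v1, v2} : Set E),
      ‖((∫ w, Real.exp (-α * g w) ∂ρ)⁻¹ • ∫ w, Real.exp (-α * g w) • w ∂ρ) - c‖ ≤
        ‖v1 - v2‖ + 2 * (q + s) ^ ν / η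
          + Real.exp (-α * (q - β)) / min (ρ.real (closedBall v1 r)) (ρ.real (closedBall v2 r))
            * ((∫ w, ‖w - c‖ ∂ρ) + ‖v1 - v2‖) := by
  intro c hcmem
  have hgrow (w : E) : ∃ v ∈ ({v1, v2} : Set E),
      (η * ‖w - v‖) ^ ((1 : ℝ) / ν) - β ≤ g w - g v := by
    have hw : w ∈ Z1 ∪ Z2 := hZ ▸ Set.mem_univ w
    exact hw.elim (fun h ↦ ⟨v1, by simp, hgrow1 w h⟩) fun h ↦ ⟨v2, by simp, hgrow2 w h⟩
  have hU : ∀ v ∈ ({v1, v2} : Set E), ∀ w ∈ closedBall v r, g w ≤ g v + s := by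
    rintro v (rfl | rfl) w hw
    · linarith [le_csSup hbdd1 (Set.mem_image_of_mem g hw), hs ▸ le_max_left _ _]
    · linarith [le_csSup hbdd2 (Set.mem_image_of_mem g hw), hs ▸ le_max_right _ _]
  have hr : 0 ≤ r := nonempty_closedBall.1 (nonempty_of_measure_ne_zero hρ1.ne')
  have hs0 : 0 ≤ s := by linarith [hU v1 (by simp) v1 (mem_closedBall_self hr)]
  have hm : 0 < min (ρ.real (closedBall v1 r)) (ρ.real (closedBall v2 r)) :=
    lt_min (ENNReal.toReal_pos hρ1.ne' (measure_ne_top ρ _))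
      (ENNReal.toReal_pos hρ2.ne' (measure_ne_top ρ _))
  have hexp := integrable_exp_neg_mul_of_bddBelow hα hg
    (bddBelow_range_of_inverse_growth hη.le hgrow (Set.toFinite _ |>.image g).bddBelow)
  have hc : ∀ v ∈ ({v1, v2} : Set E), ‖v - c‖ ≤ ‖v1 - v2‖ := by
    rcases hcmem with rfl | rfl <;> simp [norm_sub_rev]
  have hsharp := norm_integral_tilted_sub_le_of_inverse_growth hα hη hν (add_nonneg hq hs0) hm hexp
    (hmom.sub (integrable_const c)) hgrow hU (by simp) hc
  rw [integral_tilted_eq_inv_smul] at hsharp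
  refine hsharp.trans ?_
  gcongr
  · exact le_mul_of_one_le_left (by positivity) one_le_two
  · exact le_add_of_nonneg_right (norm_nonneg _)

end InverseGrowth

/-- Two-zone variant of the quantitative Laplace principle (Lemma `lem:9090`). -/
theorem stmt_12 {d : ℕ} (hd : 1 ≤ d)
    (β α η ν : ℝ) (hβ : 0 < β) (hα : 0 < α) (hη : 0 < η) (hν : 0 < ν)
    (Z1 Z2 : Set (EuclideanSpace ℝ (Fin d))) (hZ : Z1 ∪ Z2 = Set.univ)
    (g : EuclideanSpace ℝ (Fin d) → ℝ) (hg : Continuous g)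
    (v1 v2 : EuclideanSpace ℝ (Fin d)) (hv1 : v1 ∈ Z1) (hv2 : v2 ∈ Z2)
    (hgrow1 : ∀ v ∈ Z1, (η * ‖v - v1‖) ^ ((1:ℝ)/ν) - β ≤ g v - g v1)
    (hgrow2 : ∀ v ∈ Z2, (η * ‖v - v2‖) ^ ((1:ℝ)/ν) - β ≤ g v - g v2)
    (gr : ℝ → ℝ)
    (hgr : ∀ r, gr r = max (sSup (g '' Metric.closedBall v1 r) - g v1)
                          (sSup (g '' Metric.closedBall v2 r) - g v2))
    (ρ : Measure (EuclideanSpace ℝ (Fin d))) (hρ : IsProbabilityMeasure ρ)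
    (hmom : Integrable (fun w => ‖w‖) ρ)
    (vα : EuclideanSpace ℝ (Fin d))
    (hvα : vα = (∫ w, Real.exp (-α * g w) ∂ρ)⁻¹ • ∫ w, Real.exp (-α * g w) • w ∂ρ) :
    ∀ r > (0:ℝ), ∀ q > β,
      0 < ρ (Metric.closedBall v1 r) → 0 < ρ (Metric.closedBall v2 r) →
      (Metric.sphere v1 (q + gr r) ∩ closure Z1).Nonempty →
      (Metric.sphere v2 (q + gr r) ∩ closure Z2).Nonempty →
      (‖vα - v1‖
          ≤ ‖v1 - v2‖ + 2 * (q + gr r) ^ ν / η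
            + (Real.exp (-α * (q - β))
                / min (ρ (Metric.closedBall v1 r)).toReal
                      (ρ (Metric.closedBall v2 r)).toReal)
              * ((∫ w, ‖w - v1‖ ∂ρ) + ‖v1 - v2‖)) ∧
      (‖vα - v2‖
          ≤ ‖v1 - v2‖ + 2 * (q + gr r) ^ ν / η
            + (Real.exp (-α * (q - β))
                / min (ρ (Metric.closedBall v1 r)).toReal
                      (ρ (Metric.closedBall v2 r)).toReal)
              * ((∫ w, ‖w - v2‖ ∂ρ) + ‖v1 - v2‖)) := by
  intro r _ q hq hρ1 hρ2 _ _
  have hbdd (v : EuclideanSpace ℝ (Fin d)) : BddAbove (g '' closedBall v r) :=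
    ((isCompact_closedBall v r).image hg).bddAbove
  have key := stmt_12_general hα.le hη hν (hβ.trans hq).le hZ hg.aemeasurable hgrow1 hgrow2
    (hbdd v1) (hbdd v2) (hgr r) ((integrable_norm_iff aestronglyMeasurable_id).1 hmom) hρ1 hρ2
  exact hvα ▸ ⟨key v1 (by simp), key v2 (by simp)⟩
end

section
/- Define f : ℝ → ℝ by f(w) = w² for w ≤ 1, f(w) = min{1, (w−10)² − 1} for 1 ≤ w ≤ 10, and f(w) = (w−10)² − 1 for w ≥ 10. Then for every v ∈ [−1,1], the function w ↦ f(w) + (v − w)² attains its strict global minimum at w = v/2: its value there is v²/2, and f(w) + (v − w)² > v²/2 for every w ≠ v/2. In particular, for every v ∈ [−1,1] the minimizer of w ↦ f(w) + (v−w)² lies in [−1/2, 1/2], far from the unique global minimizer 10 of f. -/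
/-!
Completing the square, `w ^ 2 + (v - w) ^ 2` exceeds `v ^ 2 / 2` by `2 * (w - v / 2) ^ 2`, so in the
well at `0` the point `v / 2` is the strict minimizer. Every competitor is too expensive as long as
`v < √2`: the deeper well at `10` costs at least `(v - 10) ^ 2 / 2 - 1`, and the plateau at height
`1` costs at least `1`, and more than `v ^ 2` when `v ≤ 0`. The bound `√2` is sharp: at `v = √2` the
point `w = v` of the plateau ties with `v / 2`.
-/

theorem half_dist_sq_le_dist_sq_add_dist_sq {X : Type*} [PseudoMetricSpace X] (v a w : X) :
    dist v a ^ 2 / 2 ≤ dist w a ^ 2 + dist v w ^ 2 := by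
  have triangle : dist v a ^ 2 ≤ (dist v w + dist w a) ^ 2 := by
    gcongr
    exact dist_triangle v w a
  linarith [add_sq_le (a := dist v w) (b := dist w a)]

theorem half_dist_sq_lt_dist_sq_add_dist_sq {V P : Type*} [NormedAddCommGroup V]
    [InnerProductSpace ℝ V] [MetricSpace P] [NormedAddTorsor V P] {v a w : P}
    (hw : w ≠ midpoint ℝ v a) :
    dist v a ^ 2 / 2 < dist w a ^ 2 + dist v w ^ 2 := by
  have apollonius :=
    EuclideanGeometry.dist_sq_add_dist_sq_eq_two_mul_dist_midpoint_sq_add_half_dist_sq w v a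
  have offset_pos : 0 < dist w (midpoint ℝ v a) ^ 2 := pow_pos (dist_pos.mpr hw) 2
  rw [dist_comm v w]
  linarith

theorem half_sq_lt_sq_add_sub_sq {v w : ℝ} (hw : w ≠ v / 2) :
    v ^ 2 / 2 < w ^ 2 + (v - w) ^ 2 := by
  have hmid : w ≠ midpoint ℝ v 0 := by
    rwa [midpoint_eq_smul_add, add_zero, smul_eq_mul, invOf_eq_inv, inv_mul_eq_div]
  simpa only [Real.dist_eq, sq_abs, sub_zero] using half_dist_sq_lt_dist_sq_add_dist_sq hmid

theorem half_sq_lt_shifted_well_add_sub_sq {v a d : ℝ} (h : v ^ 2 / 2 < (v - a) ^ 2 / 2 - d)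
    (w : ℝ) : v ^ 2 / 2 < (w - a) ^ 2 - d + (v - w) ^ 2 := by
  have well : (v - a) ^ 2 / 2 ≤ (w - a) ^ 2 + (v - w) ^ 2 := by
    simpa only [Real.dist_eq, sq_abs] using half_dist_sq_le_dist_sq_add_dist_sq v a w
  linarith

theorem half_sq_lt_const_add_sub_sq {v w c : ℝ} (hc : 0 < c) (hw : 0 ≤ w) (hv : v < √(2 * c)) :
    v ^ 2 / 2 < c + (v - w) ^ 2 := by
  rcases le_total v 0 with hv0 | hv0
  · have travel : v ^ 2 ≤ (v - w) ^ 2 := by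
      rw [sub_sq_comm]
      exact sq_le_sq' (by linarith) (by linarith)
    linarith [sq_nonneg v]
  · have hv_sq : v ^ 2 < 2 * c := (Real.lt_sqrt hv0).mp hv
    linarith [sq_nonneg (v - w)]

theorem half_sq_lt_add_sub_sq_of_min_le {v w a c d y : ℝ} (hc : 0 < c) (hw : 0 ≤ w)
    (hv : v < √(2 * c)) (ha : v ^ 2 / 2 < (v - a) ^ 2 / 2 - d)
    (hy : min c ((w - a) ^ 2 - d) ≤ y) : v ^ 2 / 2 < y + (v - w) ^ 2 := by
  rcases min_le_iff.mp hy with hy | hy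
  · linarith [half_sq_lt_const_add_sub_sq hc hw hv]
  · linarith [half_sq_lt_shifted_well_add_sub_sq ha w]

theorem stmt_16_general {f : ℝ → ℝ} (h1 : ∀ w : ℝ, w ≤ 1 → f w = w ^ 2)
    (h2 : ∀ w : ℝ, 1 ≤ w → w ≤ 10 → f w = min 1 ((w - 10) ^ 2 - 1))
    (h3 : ∀ w : ℝ, 10 ≤ w → f w = (w - 10) ^ 2 - 1) {v : ℝ} (hv : v < √2) :
    f (v / 2) + (v - v / 2) ^ 2 = v ^ 2 / 2 ∧
      ∀ w : ℝ, w ≠ v / 2 → v ^ 2 / 2 < f w + (v - w) ^ 2 := by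
  have hv_lt : v < 3 / 2 := hv.trans Real.sqrt_two_lt_three_halves
  refine ⟨by rw [h1 _ (by linarith)]; ring, fun w hw => ?_⟩
  rcases le_total w 1 with hw1 | hw1
  · rw [h1 w hw1]
    exact half_sq_lt_sq_add_sub_sq hw
  · have hf : min 1 ((w - 10) ^ 2 - 1) ≤ f w := by
      rcases le_total w 10 with hw10 | hw10
      · exact (h2 w hw1 hw10).ge
      · exact (min_le_right _ _).trans (h3 w hw10).ge
    exact half_sq_lt_add_sub_sq_of_min_le one_pos (by linarith) (by rwa [mul_one])
      (by linarith) hf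

/-- In the polarized-CBO counterexample, for every `v ∈ [−1,1]` the function
`w ↦ f(w) + (v−w)²` attains its strict global minimum at `w = v/2 ∈ [−1/2,1/2]`,
with value `v²/2`. -/
theorem stmt_16 (f : ℝ → ℝ)
    (h1 : ∀ w : ℝ, w ≤ 1 → f w = w^2)
    (h2 : ∀ w : ℝ, 1 ≤ w → w ≤ 10 → f w = min 1 ((w - 10)^2 - 1))
    (h3 : ∀ w : ℝ, 10 ≤ w → f w = (w - 10)^2 - 1) :
    ∀ v ∈ Set.Icc (-1:ℝ) 1,
      f (v/2) + (v - v/2)^2 = v^2/2 ∧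
      (∀ w : ℝ, w ≠ v/2 → v^2/2 < f w + (v - w)^2) ∧
      v/2 ∈ Set.Icc (-(1/2) : ℝ) (1/2) := by
  rintro v ⟨hv_ge, hv_le⟩
  obtain ⟨value, strict_min⟩ := stmt_16_general h1 h2 h3 (hv_le.trans_lt Real.one_lt_sqrt_two)
  exact ⟨value, strict_min, by linarith, by linarith⟩
end
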